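/- Every finite simple graph with strictly more edges than vertices contains a subgraph that is either (i) a theta-graph: two distinct vertices joined by three pairwise internally vertex-disjoint paths, each of length at least 1 and at most one of length 1; (ii) a figure-eight: two cycles sharing exactly one vertex; or (iii) a dumbbell: two vertex-disjoint cycles together with a path of length at least 1 joining a vertex of one cycle to a vertex of the other, internally disjoint from both cycles. -/

import Mathlib

namespace Stmt5Aux

/-- `f 0, …, f k` is a path in `G`, all inside `S`. -/
structure IsP {V : Type*} (G : SimpleGraph V) (S : Finset V) (f : ℕ → V) (k : ℕ) : Prop where
  inj : ∀ i j, i ≤ k → j ≤ k → f i = f j → i = j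
  adj : ∀ i, i < k → G.Adj (f i) (f (i + 1))
  mem : ∀ i, i ≤ k → f i ∈ S

lemma seg {V : Type*} {G : SimpleGraph V} {S : Finset V} {f : ℕ → V} {k : ℕ}
    (h : IsP G S f k) (a d : ℕ) (hb : a + d ≤ k) :
    ∃ p : G.Walk (f a) (f (a + d)), p.IsPath ∧ p.length = d ∧
      (∀ x, x ∈ p.support ↔ ∃ t, a ≤ t ∧ t ≤ a + d ∧ f t = x) ∧
      (∀ e, e ∈ p.edges → ∃ t, a ≤ t ∧ t < a + d ∧ e = s(f t, f (t + 1))) := by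
  induction d with
  | zero =>
    refine ⟨SimpleGraph.Walk.nil, by simp, by simp, ?_, by simp⟩
    intro x
    simp only [SimpleGraph.Walk.support_nil, List.mem_singleton]
    constructor
    · rintro rfl; exact ⟨a, le_rfl, by omega, rfl⟩
    · rintro ⟨t, h1, h2, rfl⟩
      have : t = a := by omega
      rw [this]
  | succ d ih =>
    obtain ⟨p, hp, hl, hs, he⟩ := ih (by omega)
    have hadj : G.Adj (f (a + d)) (f (a + (d + 1))) := h.adj (a + d) (by omega)
    refine ⟨p.concat hadj, ?_, by simp [hl], ?_, ?_⟩
    · rw [SimpleGraph.Walk.isPath_def, SimpleGraph.Walk.support_concat]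
      rw [List.nodup_append]
      refine ⟨hp.support_nodup, by simp, ?_⟩
      intro x hx y hy
      simp only [List.mem_singleton] at hy
      subst hy
      obtain ⟨t, h1, h2, rfl⟩ := (hs x).1 hx
      intro hh
      have := h.inj _ _ (by omega) (by omega) hh
      omega
    · intro x
      rw [SimpleGraph.Walk.support_concat]
      simp only [List.mem_append, List.mem_singleton, hs]
      constructor
      · rintro (⟨t, h1, h2, rfl⟩ | rfl)
        · exact ⟨t, h1, by omega, rfl⟩
        · exact ⟨_, by omega, le_rfl, rfl⟩
      · rintro ⟨t, h1, h2, rfl⟩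
        by_cases ht : t = a + (d + 1)
        · right; rw [ht]
        · left; exact ⟨t, h1, by omega, rfl⟩
    · intro e hee
      rw [SimpleGraph.Walk.edges_concat] at hee
      simp only [List.concat_eq_append, List.mem_append, List.mem_singleton] at hee
      rcases hee with hee | rfl
      · obtain ⟨t, h1, h2, rfl⟩ := he e hee
        exact ⟨t, h1, by omega, rfl⟩
      · exact ⟨a + d, by omega, by omega, rfl⟩

lemma seg' {V : Type*} {G : SimpleGraph V} {S : Finset V} {f : ℕ → V} {k : ℕ}
    (h : IsP G S f k) (a b : ℕ) (hab : a ≤ b) (hb : b ≤ k) :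
    ∃ p : G.Walk (f a) (f b), p.IsPath ∧ p.length = b - a ∧
      (∀ x, x ∈ p.support ↔ ∃ t, a ≤ t ∧ t ≤ b ∧ f t = x) ∧
      (∀ e, e ∈ p.edges → ∃ t, a ≤ t ∧ t < b ∧ e = s(f t, f (t + 1))) := by
  obtain ⟨d, rfl⟩ := Nat.exists_eq_add_of_le hab
  simpa using seg h a d hb

/-- A chord of a path gives a cycle, based at the end. -/
lemma cyc {V : Type*} {G : SimpleGraph V} {S : Finset V} {f : ℕ → V} {k : ℕ}
    (h : IsP G S f k) (a b : ℕ) (hab : a + 2 ≤ b) (hb : b ≤ k) (hadj : G.Adj (f b) (f a)) :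
    (∃ p : G.Walk (f b) (f b), p.IsCycle ∧
      ∀ x, x ∈ p.support → ∃ t, a ≤ t ∧ t ≤ b ∧ f t = x) ∧
    (∃ p : G.Walk (f a) (f a), p.IsCycle ∧
      ∀ x, x ∈ p.support → ∃ t, a ≤ t ∧ t ≤ b ∧ f t = x) := by
  obtain ⟨p, hp, hl, hs, he⟩ := seg' h a b (by omega) hb
  have key : s(f b, f a) ∉ p.edges := by
    intro hh
    obtain ⟨t, h1, h2, h3⟩ := he _ hh
    rw [Sym2.eq_iff] at h3
    rcases h3 with ⟨h3, h4⟩ | ⟨h3, h4⟩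
    · have := h.inj _ _ (by omega) (by omega) h3
      omega
    · have := h.inj _ _ (by omega) (by omega) h3
      have := h.inj _ _ (by omega) (by omega) h4
      omega
  constructor
  · refine ⟨SimpleGraph.Walk.cons hadj p, ?_, ?_⟩
    · rw [SimpleGraph.Walk.cons_isCycle_iff]
      exact ⟨hp, key⟩
    · intro x hx
      rw [SimpleGraph.Walk.support_cons, List.mem_cons] at hx
      rcases hx with rfl | hx
      · exact ⟨b, by omega, by omega, rfl⟩
      · exact (hs x).1 hx
  · refine ⟨SimpleGraph.Walk.cons hadj.symm p.reverse, ?_, ?_⟩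
    · rw [SimpleGraph.Walk.cons_isCycle_iff]
      refine ⟨hp.reverse, ?_⟩
      rw [SimpleGraph.Walk.edges_reverse, List.mem_reverse, Sym2.eq_swap]
      exact key
    · intro x hx
      rw [SimpleGraph.Walk.support_cons, List.mem_cons] at hx
      rcases hx with rfl | hx
      · exact ⟨a, by omega, by omega, rfl⟩
      · rw [SimpleGraph.Walk.support_reverse, List.mem_reverse] at hx
        exact (hs x).1 hx

def Concl {V : Type*} (G : SimpleGraph V) : Prop :=
    (∃ (u v : V), u ≠ v ∧ ∃ (P1 P2 P3 : G.Walk u v),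
      P1.IsPath ∧ P2.IsPath ∧ P3.IsPath ∧
      1 ≤ P1.length ∧ 1 ≤ P2.length ∧ 1 ≤ P3.length ∧
      ¬(P1.length = 1 ∧ P2.length = 1) ∧
      ¬(P1.length = 1 ∧ P3.length = 1) ∧
      ¬(P2.length = 1 ∧ P3.length = 1) ∧
      (∀ x, x ∈ P1.support → x ∈ P2.support → x = u ∨ x = v) ∧
      (∀ x, x ∈ P1.support → x ∈ P3.support → x = u ∨ x = v) ∧
      (∀ x, x ∈ P2.support → x ∈ P3.support → x = u ∨ x = v)) ∨
    (∃ (v : V) (C1 C2 : G.Walk v v),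
      C1.IsCycle ∧ C2.IsCycle ∧
      (∀ x, x ∈ C1.support → x ∈ C2.support → x = v)) ∨
    (∃ (u v : V) (C1 : G.Walk u u) (C2 : G.Walk v v) (P : G.Walk u v),
      C1.IsCycle ∧ C2.IsCycle ∧ P.IsPath ∧ 1 ≤ P.length ∧
      (∀ x, x ∈ C1.support → x ∉ C2.support) ∧
      (∀ x, x ∈ P.support → x ∈ C1.support → x = u) ∧
      (∀ x, x ∈ P.support → x ∈ C2.support → x = v))

/-- A path with two distinct chords, one from each end. -/
lemma core {V : Type*} {G : SimpleGraph V} {S : Finset V} {f : ℕ → V} {k : ℕ}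
    (h : IsP G S f k) (i j : ℕ) (hi : 2 ≤ i) (hik : i ≤ k) (hj : j + 2 ≤ k)
    (h0 : G.Adj (f i) (f 0)) (hk : G.Adj (f k) (f j)) (hne : ¬(i = k ∧ j = 0)) : Concl G := by
  rcases lt_trichotomy i j with hij | hij | hij
  · right; right
    obtain ⟨⟨C1, hC1, hs1⟩, -⟩ := cyc h 0 i (by omega) hik h0
    obtain ⟨-, ⟨C2, hC2, hs2⟩⟩ := cyc h j k (by omega) le_rfl hk
    obtain ⟨P, hP, hl, hs, -⟩ := seg' h i j (by omega) (by omega)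
    refine ⟨f i, f j, C1, C2, P, hC1, hC2, hP, by omega, ?_, ?_, ?_⟩
    · intro x hx hx'
      obtain ⟨t, a1, a2, rfl⟩ := hs1 x hx
      obtain ⟨t', b1, b2, e⟩ := hs2 _ hx'
      have := h.inj _ _ (by omega) (by omega) e
      omega
    · intro x hx hx'
      obtain ⟨t, a1, a2, rfl⟩ := (hs x).1 hx
      obtain ⟨t', b1, b2, e⟩ := hs1 _ hx'
      have := h.inj _ _ (by omega) (by omega) e
      congr 1; omega
    · intro x hx hx'
      obtain ⟨t, a1, a2, rfl⟩ := (hs x).1 hx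
      obtain ⟨t', b1, b2, e⟩ := hs2 _ hx'
      have := h.inj _ _ (by omega) (by omega) e
      congr 1; omega
  · subst hij
    right; left
    obtain ⟨⟨C1, hC1, hs1⟩, -⟩ := cyc h 0 i (by omega) hik h0
    obtain ⟨-, ⟨C2, hC2, hs2⟩⟩ := cyc h i k (by omega) le_rfl hk
    refine ⟨f i, C1, C2, hC1, hC2, ?_⟩
    intro x hx hx'
    obtain ⟨t, a1, a2, rfl⟩ := hs1 x hx
    obtain ⟨t', b1, b2, e⟩ := hs2 _ hx'
    have := h.inj _ _ (by omega) (by omega) e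
    congr 1; omega
  · left
    obtain ⟨P1, hP1, hl1, hs1, -⟩ := seg' h j i (by omega) (by omega)
    obtain ⟨Q2, hQ2, hl2, hs2, -⟩ := seg' h 0 j (by omega) (by omega)
    obtain ⟨Q3, hQ3, hl3, hs3, -⟩ := seg' h i k (by omega) (by omega)
    have hs2' : ∀ x, x ∈ (SimpleGraph.Walk.cons h0 Q2).reverse.support →
        x = f i ∨ ∃ t, 0 ≤ t ∧ t ≤ j ∧ f t = x := by
      intro x hx
      rwa [SimpleGraph.Walk.support_reverse, List.mem_reverse, SimpleGraph.Walk.support_cons,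
        List.mem_cons, hs2] at hx
    have hs3' : ∀ x, x ∈ (SimpleGraph.Walk.cons hk.symm Q3.reverse).support →
        x = f j ∨ ∃ t, i ≤ t ∧ t ≤ k ∧ f t = x := by
      intro x hx
      rwa [SimpleGraph.Walk.support_cons, List.mem_cons, SimpleGraph.Walk.support_reverse,
        List.mem_reverse, hs3] at hx
    refine ⟨f j, f i, ?_, P1, (SimpleGraph.Walk.cons h0 Q2).reverse,
      SimpleGraph.Walk.cons hk.symm Q3.reverse, hP1, ?_, ?_, by omega, by simp, by simp,
      ?_, ?_, ?_, ?_, ?_, ?_⟩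
    · intro e
      have := h.inj _ _ (by omega) (by omega) e
      omega
    · apply SimpleGraph.Walk.IsPath.reverse
      rw [SimpleGraph.Walk.cons_isPath_iff]
      refine ⟨hQ2, ?_⟩
      rw [hs2]
      rintro ⟨t, a1, a2, e⟩
      have := h.inj _ _ (by omega) (by omega) e
      omega
    · rw [SimpleGraph.Walk.cons_isPath_iff]
      refine ⟨hQ3.reverse, ?_⟩
      rw [SimpleGraph.Walk.support_reverse, List.mem_reverse, hs3]
      rintro ⟨t, a1, a2, e⟩
      have := h.inj _ _ (by omega) (by omega) e
      omega
    · simp only [SimpleGraph.Walk.length_reverse, SimpleGraph.Walk.length_cons]; omega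
    · simp only [SimpleGraph.Walk.length_reverse, SimpleGraph.Walk.length_cons]; omega
    · simp only [SimpleGraph.Walk.length_reverse, SimpleGraph.Walk.length_cons]; omega
    · intro x hx hx'
      obtain ⟨t, a1, a2, rfl⟩ := (hs1 x).1 hx
      rcases hs2' _ hx' with e | ⟨t', b1, b2, e⟩
      · exact Or.inr e
      · have := h.inj _ _ (by omega) (by omega) e
        left; congr 1; omega
    · intro x hx hx'
      obtain ⟨t, a1, a2, rfl⟩ := (hs1 x).1 hx
      rcases hs3' _ hx' with e | ⟨t', b1, b2, e⟩
      · exact Or.inl e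
      · have := h.inj _ _ (by omega) (by omega) e
        right; congr 1; omega
    · intro x hx hx'
      rcases hs2' _ hx with e | ⟨t, a1, a2, rfl⟩
      · exact Or.inr e
      rcases hs3' _ hx' with e | ⟨t', b1, b2, e⟩
      · exact Or.inl e
      · have := h.inj _ _ (by omega) (by omega) e
        omega

lemma IsP.rev {V : Type*} {G : SimpleGraph V} {S : Finset V} {f : ℕ → V} {k : ℕ}
    (h : IsP G S f k) : IsP G S (fun n => f (k - n)) k := by
  refine ⟨?_, ?_, ?_⟩
  · intro i j hi hj e
    have := h.inj _ _ (by omega) (by omega) e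
    omega
  · intro i hi
    have := (h.adj (k - (i + 1)) (by omega)).symm
    rwa [show k - (i + 1) + 1 = k - i by omega] at this
  · intro i hi
    exact h.mem _ (by omega)

lemma IsP.rot {V : Type*} {G : SimpleGraph V} {S : Finset V} {f : ℕ → V} {k : ℕ}
    (h : IsP G S f k) (hc : G.Adj (f k) (f 0)) (t : ℕ) (ht : t ≤ k) :
    IsP G S (fun n => if t + n ≤ k then f (t + n) else f (t + n - k - 1)) k := by
  refine ⟨?_, ?_, ?_⟩
  · intro i j hi hj e
    split_ifs at e <;>
    · have := h.inj _ _ (by omega) (by omega) e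
      omega
  · intro i hi
    by_cases h1 : t + (i + 1) ≤ k
    · rw [if_pos h1, if_pos (by omega)]
      exact h.adj (t + i) (by omega)
    · by_cases h2 : t + i ≤ k
      · rw [if_neg h1, if_pos h2, show t + i = k by omega,
          show t + (i + 1) - k - 1 = 0 by omega]
        exact hc
      · rw [if_neg h1, if_neg h2,
          show t + (i + 1) - k - 1 = (t + i - k - 1) + 1 by omega]
        exact h.adj _ (by omega)
  · intro i hi
    split_ifs <;> exact h.mem _ (by omega)

lemma IsP.cons {V : Type*} {G : SimpleGraph V} {S : Finset V} {f : ℕ → V} {k : ℕ}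
    (h : IsP G S f k) (y : V) (hy : y ∈ S) (ha : G.Adj y (f 0)) (hn : ∀ t, t ≤ k → f t ≠ y) :
    IsP G S (fun n => Nat.casesOn n y f) (k + 1) := by
  refine ⟨?_, ?_, ?_⟩
  · rintro (_ | i) (_ | j) hi hj e
    · rfl
    · exact absurd e.symm (hn _ (by omega))
    · exact absurd e (hn _ (by omega))
    · have := h.inj i j (by omega) (by omega) e
      omega
  · rintro (_ | i) hi
    · exact ha
    · exact h.adj i (by omega)
  · rintro (_ | i) hi
    · exact hy
    · exact h.mem i (by omega)

open Classical in
lemma main {V : Type*} (G : SimpleGraph V) (S : Finset V)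
    (h2 : ∀ v ∈ S, 2 ≤ (S.filter (G.Adj v)).card) (w : V) (hw : w ∈ S)
    (h3 : 3 ≤ (S.filter (G.Adj w)).card) : Concl G := by
  let Good : ℕ → Prop := fun k => ∃ f, IsP G S f k ∧ ∃ t ≤ k, 3 ≤ (S.filter (G.Adj (f t))).card
  have hg0 : Good 0 := by
    refine ⟨fun _ => w, ⟨by intros; omega, by intros; omega, fun _ _ => hw⟩, 0, le_rfl, h3⟩
  have hbd : ∀ k, Good k → k ≤ S.card := by
    rintro k ⟨f, hf, -⟩
    have := Finset.card_le_card_of_injOn (s := Finset.range (k + 1)) (t := S) f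
      (fun i hi => hf.mem i (by simp at hi; omega))
      (fun i hi j hj e => hf.inj i j (by simp at hi; omega) (by simp at hj; omega) e)
    simp at this
    omega
  obtain ⟨k, hk, hmax⟩ : ∃ k, Good k ∧ ¬ Good (k + 1) := by
    by_contra hcon
    push Not at hcon
    have : ∀ n, Good n := fun n => Nat.rec hg0 (fun n ih => hcon n ih) n
    have := hbd _ (this (S.card + 1))
    omega
  -- neighbours of the start of a maximal path lie on the path
  have hnb : ∀ f, IsP G S f k → (∃ t ≤ k, 3 ≤ (S.filter (G.Adj (f t))).card) →
      ∀ y ∈ S.filter (G.Adj (f 0)), y ≠ f 1 → ∃ i, 2 ≤ i ∧ i ≤ k ∧ f i = y := by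
    rintro f hf ⟨t, ht, ht3⟩ y hy hy1
    rw [Finset.mem_filter] at hy
    by_contra hcon
    apply hmax
    refine ⟨_, hf.cons y hy.1 hy.2.symm ?_, t + 1, by omega, ht3⟩
    intro i hi e
    apply hcon
    refine ⟨i, ?_, hi, e⟩
    rcases i with _ | _ | i
    · rw [e] at hy; exact absurd hy.2 (G.irrefl)
    · exact absurd e.symm hy1
    · omega
  have hst : ∀ f, IsP G S f k → (∃ t ≤ k, 3 ≤ (S.filter (G.Adj (f t))).card) →
      ∃ i, 2 ≤ i ∧ i ≤ k ∧ G.Adj (f i) (f 0) := by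
    intro f hf hf3
    obtain ⟨y, hy, hy1⟩ := Finset.exists_mem_ne (h2 (f 0) (hf.mem 0 (by omega))) (f 1)
    obtain ⟨i, a, b, rfl⟩ := hnb f hf hf3 y hy hy1
    exact ⟨i, a, b, (Finset.mem_filter.1 hy).2.symm⟩
  have hen : ∀ f, IsP G S f k → (∃ t ≤ k, 3 ≤ (S.filter (G.Adj (f t))).card) →
      ∃ j, j + 2 ≤ k ∧ G.Adj (f k) (f j) := by
    rintro f hf ⟨t, ht, ht3⟩
    obtain ⟨i, a, b, c⟩ := hst _ hf.rev ⟨k - t, by omega, by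
      rwa [show k - (k - t) = t by omega]⟩
    exact ⟨k - i, by omega, c.symm⟩
  obtain ⟨f, hf, hf3⟩ := hk
  obtain ⟨i, hi, hik, h0⟩ := hst f hf hf3
  obtain ⟨j, hj, hkj⟩ := hen f hf hf3
  by_cases hne : i = k ∧ j = 0
  · obtain ⟨rfl, rfl⟩ := hne
    obtain ⟨t, ht, ht3⟩ := hf3
    have hg := hf.rot hkj t ht
    set g : ℕ → V := fun n => if t + n ≤ i then f (t + n) else f (t + n - i - 1) with hgdef
    have hg0 : g 0 = f t := by simp [hgdef, ht]
    have hg3 : ∃ t ≤ i, 3 ≤ (S.filter (G.Adj (g t))).card := ⟨0, by omega, by rwa [hg0]⟩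
    obtain ⟨j', hj', hkj'⟩ := hen g hg hg3
    rw [← hg0] at ht3
    have hc : 1 < ((S.filter (G.Adj (g 0))).erase (g 1)).card := by
      have := Finset.pred_card_le_card_erase (s := S.filter (G.Adj (g 0))) (a := g 1)
      omega
    obtain ⟨y, hy, hyk⟩ := Finset.exists_mem_ne hc (g i)
    rw [Finset.mem_erase] at hy
    obtain ⟨i', a, b, rfl⟩ := hnb g hg hg3 y hy.2 hy.1
    refine core hg i' j' a b hj' (Finset.mem_filter.1 hy.2).2.symm hkj' ?_
    rintro ⟨rfl, -⟩
    exact hyk rfl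
  · exact core hf i j hi hik hj h0 hkj hne

open Classical in
lemma reduce {V : Type*} (G : SimpleGraph V) (S : Finset V)
    (h : 2 * S.card < ∑ v ∈ S, (S.filter (G.Adj v)).card) : Concl G := by
  induction S using Finset.strongInduction with
  | H S ih =>
    by_cases hd : ∀ v ∈ S, 2 ≤ (S.filter (G.Adj v)).card
    · have : ∃ w ∈ S, 3 ≤ (S.filter (G.Adj w)).card := by
        by_contra hcon
        push Not at hcon
        have := Finset.sum_le_card_nsmul S (fun v => (S.filter (G.Adj v)).card) 2
          (fun v hv => by have := hcon v hv; omega)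
        simp only [smul_eq_mul] at this
        omega
      obtain ⟨w, hw, hw3⟩ := this
      exact main G S hd w hw hw3
    · push Not at hd
      obtain ⟨v, hv, hlt⟩ := hd
      refine ih (S.erase v) (Finset.erase_ssubset hv) ?_
      have hcard := Finset.card_erase_add_one hv
      rw [← Finset.add_sum_erase S _ hv] at h
      have h1 : ∀ x ∈ S.erase v, (S.filter (G.Adj x)).card =
          ((S.erase v).filter (G.Adj x)).card + if G.Adj v x then 1 else 0 := by
        intro x hx
        rw [Finset.filter_erase]
        split_ifs with hvx
        · rw [Finset.card_erase_add_one]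
          simp [hv, hvx.symm]
        · rw [Finset.erase_eq_of_notMem]
          · rfl
          · simp [G.adj_comm x v, hvx]
      rw [Finset.sum_congr rfl h1, Finset.sum_add_distrib, ← Finset.card_filter] at h
      have h4 : ((S.erase v).filter (fun i => G.Adj v i)).card ≤ (S.filter (G.Adj v)).card :=
        Finset.card_le_card (Finset.filter_subset_filter _ (Finset.erase_subset _ _))
      omega

end Stmt5Aux

/-- Every finite simple graph with strictly more edges than vertices contains
(i) a theta-subgraph: two distinct vertices joined by three pairwise internally
vertex-disjoint paths, each of length at least 1 and at most one of length 1; or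
(ii) a figure-eight: two cycles sharing exactly one vertex; or
(iii) a dumbbell: two vertex-disjoint cycles together with a path of length at least 1
joining a vertex of one cycle to a vertex of the other, internally disjoint from both. -/
theorem stmt_5 {V : Type*} [Fintype V] (G : SimpleGraph V) [DecidableRel G.Adj]
    (h : Fintype.card V < G.edgeFinset.card) :
    -- (i) theta-graph
    (∃ (u v : V), u ≠ v ∧ ∃ (P1 P2 P3 : G.Walk u v),
      P1.IsPath ∧ P2.IsPath ∧ P3.IsPath ∧
      1 ≤ P1.length ∧ 1 ≤ P2.length ∧ 1 ≤ P3.length ∧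
      ¬(P1.length = 1 ∧ P2.length = 1) ∧
      ¬(P1.length = 1 ∧ P3.length = 1) ∧
      ¬(P2.length = 1 ∧ P3.length = 1) ∧
      (∀ x, x ∈ P1.support → x ∈ P2.support → x = u ∨ x = v) ∧
      (∀ x, x ∈ P1.support → x ∈ P3.support → x = u ∨ x = v) ∧
      (∀ x, x ∈ P2.support → x ∈ P3.support → x = u ∨ x = v)) ∨
    -- (ii) figure-eight
    (∃ (v : V) (C1 C2 : G.Walk v v),
      C1.IsCycle ∧ C2.IsCycle ∧
      (∀ x, x ∈ C1.support → x ∈ C2.support → x = v)) ∨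
    -- (iii) dumbbell
    (∃ (u v : V) (C1 : G.Walk u u) (C2 : G.Walk v v) (P : G.Walk u v),
      C1.IsCycle ∧ C2.IsCycle ∧ P.IsPath ∧ 1 ≤ P.length ∧
      (∀ x, x ∈ C1.support → x ∉ C2.support) ∧
      (∀ x, x ∈ P.support → x ∈ C1.support → x = u) ∧
      (∀ x, x ∈ P.support → x ∈ C2.support → x = v)) := by
  classical
  apply Stmt5Aux.reduce G Finset.univ
  have h1 := G.sum_degrees_eq_twice_card_edges
  have h2 : ∀ v, (Finset.univ.filter (G.Adj v)).card = G.degree v := by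
    intro v
    rw [← G.card_neighborFinset_eq_degree, G.neighborFinset_eq_filter]
  rw [Finset.card_univ]
  have h3 : ∑ v, (Finset.univ.filter (G.Adj v)).card = 2 * G.edgeFinset.card := by
    rw [← h1]
    exact Finset.sum_congr rfl (fun v _ => h2 v)
  convert (show 2 * Fintype.card V < 2 * G.edgeFinset.card by omega) using 1
  rw [← h3]
  refine Finset.sum_congr rfl (fun v _ => ?_)
  congr
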